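/- Let A be a random s×t matrix over F_q with arbitrary distribution and B an independent totally random t×m matrix over F_q. Then for any r ≤ min(n, m, t), Pr{rank(AB) = r | rank(A) = n} = ζ_r^{n,m}, where ζ_r^{n,m} = q^{-(n-r)(m-r)} ∏_{k=0}^{r-1} (1-q^{-n+k})(1-q^{-m+k})/(1-q^{-r+k}). -/

import Mathlib

open scoped Classical

/-- `ζ_r^{n,m} = q^{-(n-r)(m-r)} ∏_{k=0}^{r-1} (1-q^{-n+k})(1-q^{-m+k})/(1-q^{-r+k})`. -/
noncomputable def zeta2 (q : ℝ) (r n m : ℕ) : ℝ :=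
  q ^ (-(((n : ℤ) - r) * ((m : ℤ) - r))) *
    ∏ k ∈ Finset.range r,
      ((1 - q ^ ((k : ℤ) - n)) * (1 - q ^ ((k : ℤ) - m)) / (1 - q ^ ((k : ℤ) - r)))

/-!
Condition on `A = a` with `a` of rank `n`. The columns of `a * B` are then independent and uniform
on the column space of `a`, so only tuples of vectors in an `n`-dimensional space `V` over the
field with `q` elements matter. If the first `m` vectors span a space of dimension `r`, then `q ^ r`
of the `q ^ n` choices for the next vector keep the dimension and all others raise it by one. The
resulting recurrence for the number of `m`-tuples of rank `r` is, after division by `q ^ (n * m)`,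
the `q`-Pascal rule satisfied by `zeta2`.
-/

open Module Finset

section Zeta

theorem zeta2_zero_left (q : ℝ) (n m : ℕ) : zeta2 q 0 n m = q ^ (-((n : ℤ) * m)) := by
  simp [zeta2]

theorem zeta2_succ_zero_right (q : ℝ) (r n : ℕ) : zeta2 q (r + 1) n 0 = 0 := by
  simp [zeta2, prod_range_succ']

theorem zeta2_eq_mul_prod (q : ℝ) (r n m : ℕ) :
    zeta2 q r n m = q ^ (-(((n : ℤ) - r) * ((m : ℤ) - r))) *
      ((∏ k ∈ range r, (1 - q ^ ((k : ℤ) - n))) * (∏ k ∈ range r, (1 - q ^ ((k : ℤ) - m))) /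
        ∏ k ∈ range r, (1 - q ^ ((k : ℤ) - r))) := by
  rw [zeta2, prod_div_distrib, prod_mul_distrib]

theorem prod_range_succ_one_sub_zpow (q : ℝ) (r m : ℕ) :
    ∏ k ∈ range (r + 1), (1 - q ^ ((k : ℤ) - (m + 1 : ℕ))) =
      (∏ k ∈ range r, (1 - q ^ ((k : ℤ) - m))) * (1 - q ^ (-(m : ℤ) - 1)) := by
  rw [prod_range_succ']
  push_cast
  simp only [add_sub_add_right_eq_sub, zero_sub, neg_add']

theorem zeta2_succ_succ {q : ℝ} {r : ℕ} (hq : q ≠ 0) (hqr : q ^ (r + 1) ≠ 1) (n m : ℕ) :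
    zeta2 q (r + 1) n (m + 1) =
      q ^ ((r : ℤ) + 1 - n) * zeta2 q (r + 1) n m +
        (1 - q ^ ((r : ℤ) - n)) * zeta2 q r n m := by
  set e : ℤ := -(((n : ℤ) - (r + 1 : ℕ)) * (m - (r + 1 : ℕ))) with he
  have exponent_succ : q ^ (-(((n : ℤ) - (r + 1 : ℕ)) * ((m + 1 : ℕ) - (r + 1 : ℕ)))) =
      q ^ ((r : ℤ) + 1 - n) * q ^ e := by
    rw [← zpow_add₀ hq, he]
    congr 1
    push_cast
    ring
  have exponent_pred : q ^ (-(((n : ℤ) - r) * (m - r))) =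
      q ^ ((r : ℤ) + 1 - n) * q ^ e * q ^ ((r : ℤ) - m) := by
    rw [← zpow_add₀ hq, ← zpow_add₀ hq, he]
    congr 1
    push_cast
    ring
  have last_factor : q ^ (-(m : ℤ) - 1) = q ^ ((r : ℤ) - m) * q ^ (-(r : ℤ) - 1) := by
    rw [← zpow_add₀ hq]
    congr 1
    ring
  have denominator_ne_zero : 1 - q ^ (-(r : ℤ) - 1) ≠ 0 := by
    rw [← neg_add', zpow_neg, sub_ne_zero, ne_comm, inv_ne_one]
    exact_mod_cast hqr
  simp only [zeta2_eq_mul_prod]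
  rw [prod_range_succ_one_sub_zpow, prod_range_succ_one_sub_zpow, prod_range_succ,
    prod_range_succ, exponent_succ, exponent_pred, last_factor, ← he]
  generalize q ^ (-(r : ℤ) - 1) = u at *
  generalize ∏ k ∈ range r, (1 - q ^ ((k : ℤ) - r)) = D
  rw [mul_comm D, ← div_div, ← div_div]
  field_simp
  ring

end Zeta

section Counting

variable (K : Type*) {V : Type*} [DivisionRing K] [AddCommGroup V] [Module K V]

theorem finrank_insert_eq_succ_iff [FiniteDimensional K V] (v : V) (s : Set V) (r : ℕ) :
    (insert v s).finrank K = r + 1 ↔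
      v ∈ Submodule.span K s ∧ s.finrank K = r + 1 ∨ v ∉ Submodule.span K s ∧ s.finrank K = r := by
  by_cases hv : v ∈ Submodule.span K s
  · have hins : (insert v s).finrank K = s.finrank K := by
      rw [Set.finrank, Submodule.span_insert_eq_span hv, Set.finrank]
    simp [hins, hv]
  · have hins : (insert v s).finrank K = s.finrank K + 1 := by
      rw [Set.finrank, Submodule.span_insert, sup_comm, Submodule.finrank_sup_span_singleton hv,
        Set.finrank]
    simp [hins, hv]

variable [Fintype V]

variable (V) in
/-- The `ι`-tuples of vectors of `V` spanning a subspace of dimension `r`, the analogue over an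
abstract space of the matrices of rank `r` whose columns are indexed by `ι`. -/
noncomputable def tuplesOfRank (ι : Type*) [Fintype ι] [DecidableEq ι] (r : ℕ) :
    Finset (ι → V) :=
  {v | (Set.range v).finrank K = r}

variable (V)

theorem card_tuplesOfRank_congr {ι κ : Type*} [Fintype ι] [DecidableEq ι] [Fintype κ]
    [DecidableEq κ] (e : ι ≃ κ) (r : ℕ) :
    #(tuplesOfRank K V ι r) = #(tuplesOfRank K V κ r) :=
  card_equiv (e.arrowCongr (Equiv.refl V)) fun v => by
    simp [tuplesOfRank, Equiv.arrowCongr, e.symm.surjective.range_comp]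

theorem card_tuplesOfRank_zero (ι : Type*) [Fintype ι] [DecidableEq ι] :
    #(tuplesOfRank K V ι 0) = 1 := by
  rw [card_eq_one]
  refine ⟨0, ext fun v => ?_⟩
  simp only [tuplesOfRank, mem_filter_univ, mem_singleton, Set.finrank, Submodule.finrank_eq_zero,
    Submodule.span_eq_bot, Set.forall_mem_range, funext_iff, Pi.zero_apply]

theorem card_tuplesOfRank_empty_succ (r : ℕ) : #(tuplesOfRank K V (Fin 0) (r + 1)) = 0 := by
  simp [tuplesOfRank, Set.range_eq_empty]

variable {V} [Fintype K]

theorem card_filter_mem_span (s : Set V) :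
    #{v | v ∈ Submodule.span K s} = Fintype.card K ^ s.finrank K :=
  (Fintype.card_subtype _).symm.trans (card_eq_pow_finrank (V := Submodule.span K s))

theorem card_filter_notMem_span (s : Set V) :
    (#{v | v ∉ Submodule.span K s} : ℝ) =
      (Fintype.card K : ℝ) ^ finrank K V - (Fintype.card K : ℝ) ^ s.finrank K := by
  have h := card_filter_add_card_filter_not (s := univ) (· ∈ Submodule.span K s)
  rw [card_filter_mem_span, card_univ, card_eq_pow_finrank (K := K) (V := V)] at h
  rw [eq_sub_iff_add_eq']
  exact_mod_cast h

theorem card_filter_finrank_insert (s : Set V) (r : ℕ) :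
    (#{v | (insert v s).finrank K = r + 1} : ℝ) =
      (if s.finrank K = r + 1 then (Fintype.card K : ℝ) ^ (r + 1) else 0) +
        if s.finrank K = r then
          (Fintype.card K : ℝ) ^ finrank K V - (Fintype.card K : ℝ) ^ r else 0 := by
  simp only [finrank_insert_eq_succ_iff]
  split_ifs with hsucc hr hr
  · lia
  · simp [hsucc, card_filter_mem_span]
  · simp [hr, card_filter_notMem_span]
  · simp [hsucc, hr]

variable (V)

theorem card_tuplesOfRank_succ_succ (m r : ℕ) :
    (#(tuplesOfRank K V (Fin (m + 1)) (r + 1)) : ℝ) =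
      (Fintype.card K : ℝ) ^ (r + 1) * #(tuplesOfRank K V (Fin m) (r + 1)) +
        ((Fintype.card K : ℝ) ^ finrank K V - (Fintype.card K : ℝ) ^ r) *
          #(tuplesOfRank K V (Fin m) r) := by
  calc (#(tuplesOfRank K V (Fin (m + 1)) (r + 1)) : ℝ)
      = ∑ b : Fin m → V, (#{v | (insert v (Set.range b)).finrank K = r + 1} : ℝ) := by
        rw [tuplesOfRank, natCast_card_filter, ← (Fin.consEquiv fun _ => V).sum_comp,
          Fintype.sum_prod_type_right]
        simp only [Fin.consEquiv, Equiv.coe_fn_mk, Fin.range_cons, natCast_card_filter]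
    _ = _ := by
        simp only [card_filter_finrank_insert, sum_add_distrib]
        simp only [tuplesOfRank, natCast_card_filter, mul_sum, mul_ite, mul_one, mul_zero]

theorem card_tuplesOfRank_fin (m r : ℕ) :
    (#(tuplesOfRank K V (Fin m) r) : ℝ) =
      (Fintype.card V : ℝ) ^ m * zeta2 (Fintype.card K) r (finrank K V) m := by
  have hq : (1 : ℝ) < Fintype.card K := by exact_mod_cast Fintype.one_lt_card
  have hq0 : (Fintype.card K : ℝ) ≠ 0 := by positivity
  rw [card_eq_pow_finrank (K := K) (V := V)]
  induction m generalizing r with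
  | zero =>
    cases r with
    | zero => simp [card_tuplesOfRank_zero, zeta2_zero_left]
    | succ r => simp [card_tuplesOfRank_empty_succ, zeta2_succ_zero_right]
  | succ m ih =>
    cases r with
    | zero =>
      rw [card_tuplesOfRank_zero, zeta2_zero_left, zpow_neg]
      push_cast
      rw [← pow_mul]
      exact_mod_cast (mul_inv_cancel₀ (pow_ne_zero _ hq0)).symm
    | succ r =>
      rw [card_tuplesOfRank_succ_succ, ih, ih,
        zeta2_succ_succ hq0 (one_lt_pow₀ hq r.succ_ne_zero).ne', zpow_sub₀ hq0, zpow_sub₀ hq0,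
        zpow_add_one₀ hq0]
      simp only [zpow_natCast, Nat.cast_pow]
      field_simp
      ring

theorem card_tuplesOfRank (ι : Type*) [Fintype ι] [DecidableEq ι] (r : ℕ) :
    (#(tuplesOfRank K V ι r) : ℝ) =
      (Fintype.card V : ℝ) ^ Fintype.card ι *
        zeta2 (Fintype.card K) r (finrank K V) (Fintype.card ι) := by
  rw [card_tuplesOfRank_congr K V (Fintype.equivFin ι), card_tuplesOfRank_fin]

end Counting

section Conditioning

variable {α β : Type*} (p : PMF α) (κ : α → PMF β) {E : Set α} {S : α → Set β} {c : ENNReal}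

theorem toOuterMeasure_bind_map_prodMk_of_const (hS : ∀ a ∈ E, (κ a).toOuterMeasure (S a) = c) :
    (p.bind fun a => (κ a).map fun b => (a, b)).toOuterMeasure {x | x.2 ∈ S x.1 ∧ x.1 ∈ E} =
      c * p.toOuterMeasure E := by
  rw [PMF.toOuterMeasure_bind_apply, PMF.toOuterMeasure_apply, ← ENNReal.tsum_mul_left]
  refine tsum_congr fun a => ?_
  rw [PMF.toOuterMeasure_map_apply, Set.preimage_ofPred_eq]
  by_cases ha : a ∈ E
  · simp [ha, hS a ha, mul_comm]
  · simp [ha]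

theorem toOuterMeasure_bind_map_prodMk_fst (E : Set α) :
    (p.bind fun a => (κ a).map fun b => (a, b)).toOuterMeasure {x | x.1 ∈ E} =
      p.toOuterMeasure E := by
  simpa using toOuterMeasure_bind_map_prodMk_of_const p κ (E := E) (S := fun _ => Set.univ) (c := 1)
    fun a _ => (PMF.toOuterMeasure_apply_eq_one_iff _ _).2 (Set.subset_univ _)

theorem toOuterMeasure_bind_map_prodMk_div_of_const (hE : p.toOuterMeasure E ≠ 0)
    (hS : ∀ a ∈ E, (κ a).toOuterMeasure (S a) = c) :
    (p.bind fun a => (κ a).map fun b => (a, b)).toOuterMeasure {x | x.2 ∈ S x.1 ∧ x.1 ∈ E} /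
        (p.bind fun a => (κ a).map fun b => (a, b)).toOuterMeasure {x | x.1 ∈ E} = c := by
  have hE_top : p.toOuterMeasure E ≠ ⊤ := by
    rw [PMF.toOuterMeasure_apply]
    exact p.tsum_coe_indicator_ne_top E
  rw [toOuterMeasure_bind_map_prodMk_of_const p κ hS, toOuterMeasure_bind_map_prodMk_fst,
    ENNReal.mul_div_cancel_right hE hE_top]

end Conditioning

section Uniform

theorem map_uniformOfFintype_of_surjective {G H : Type*} [AddGroup G] [Fintype G] [AddMonoid H]
    [Fintype H] (f : G →+ H) (hf : Function.Surjective f) :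
    (PMF.uniformOfFintype G).map f = PMF.uniformOfFintype H := by
  have hfiber (y : H) : #{x | f x = y} = #{x | f x = 0} :=
    AddMonoidHom.card_fiber_eq_of_mem_range f (hf y) (hf 0)
  have hcard : Fintype.card G = Fintype.card H * #{x | f x = 0} := by
    rw [← card_univ, card_eq_sum_card_fiberwise (f := f) (t := univ) (by simp)]
    simp only [hfiber, sum_const, card_univ, smul_eq_mul]
  have hker : (#{x | f x = 0} : ENNReal) ≠ 0 :=
    Nat.cast_ne_zero.2 (card_ne_zero_of_mem (mem_filter_univ 0 |>.2 (map_zero f)))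
  ext y
  rw [← PMF.toOuterMeasure_apply_singleton, PMF.toOuterMeasure_map_apply,
    PMF.toOuterMeasure_uniformOfFintype_apply, PMF.uniformOfFintype_apply, hcard,
    Fintype.card_subtype]
  simp only [Set.mem_preimage, Set.mem_singleton_iff, hfiber]
  rw [Nat.cast_mul, ← one_div]
  simpa only [one_mul] using
    ENNReal.mul_div_mul_right 1 (Fintype.card H : ENNReal) hker (ENNReal.natCast_ne_top _)

theorem toOuterMeasure_uniformOfFintype_tuplesOfRank (K V ι : Type*) [DivisionRing K]
    [AddCommGroup V] [Module K V] [Fintype K] [Fintype V] [Fintype ι] [DecidableEq ι] (r : ℕ) :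
    (PMF.uniformOfFintype (ι → V)).toOuterMeasure {v | (Set.range v).finrank K = r} =
      ENNReal.ofReal (zeta2 (Fintype.card K) r (finrank K V) (Fintype.card ι)) := by
  have hpos : (0 : ℝ) < Fintype.card (ι → V) := by exact_mod_cast Fintype.card_pos
  have hzeta : zeta2 (Fintype.card K) r (finrank K V) (Fintype.card ι) =
      #(tuplesOfRank K V ι r) / Fintype.card (ι → V) := by
    rw [eq_div_iff hpos.ne', card_tuplesOfRank, mul_comm, Fintype.card_fun, Nat.cast_pow]
  rw [PMF.toOuterMeasure_uniformOfFintype_apply, hzeta, ENNReal.ofReal_div_of_pos hpos,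
    ENNReal.ofReal_natCast, ENNReal.ofReal_natCast, Fintype.card_subtype]
  rfl

variable {F S T M : Type*} [Field F] [Fintype T]

theorem rank_mul_eq_finrank_range_rangeRestrict (a : Matrix S T F) [Fintype M] (b : Matrix T M F) :
    (a * b).rank = (Set.range fun j => a.mulVecLin.rangeRestrict (b.col j)).finrank F := by
  have hcols : (a * b).col = (LinearMap.range a.mulVecLin).subtype ∘
      fun j => a.mulVecLin.rangeRestrict (b.col j) := rfl
  rw [Matrix.rank_eq_finrank_span_cols, hcols, Set.range_comp, Submodule.span_image,
    Submodule.finrank_map_subtype_eq, Set.finrank]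

theorem map_uniformOfFintype_linearMap_col [Fintype F] [Fintype M] [DecidableEq T]
    [DecidableEq M] {U : Type*} [AddCommGroup U] [Module F U] [Fintype U]
    (f : (T → F) →ₗ[F] U) (hf : Function.Surjective f) :
    (PMF.uniformOfFintype (Matrix T M F)).map (fun b j => f (b.col j)) =
      PMF.uniformOfFintype (M → U) := by
  let g : Matrix T M F →+ (M → U) :=
    { toFun b j := f (b.col j)
      map_zero' := funext fun _ => map_zero f
      map_add' _ _ := funext fun _ => map_add f _ _ }
  refine map_uniformOfFintype_of_surjective g fun u => ?_
  choose v hv using fun j => hf (u j)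
  exact ⟨Matrix.of fun i j => v j i, funext hv⟩

theorem toOuterMeasure_uniformOfFintype_rank_mul [Fintype F] [Fintype M] [DecidableEq T]
    [DecidableEq M] (a : Matrix S T F) (r : ℕ) :
    (PMF.uniformOfFintype (Matrix T M F)).toOuterMeasure {b | (a * b).rank = r} =
      ENNReal.ofReal (zeta2 (Fintype.card F) r a.rank (Fintype.card M)) := by
  have := Fintype.ofFinite (LinearMap.range a.mulVecLin)
  simp only [rank_mul_eq_finrank_range_rangeRestrict]
  rw [Matrix.rank, ← toOuterMeasure_uniformOfFintype_tuplesOfRank,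
    ← map_uniformOfFintype_linearMap_col _ a.mulVecLin.surjective_rangeRestrict,
    PMF.toOuterMeasure_map_apply, Set.preimage_ofPred_eq]

end Uniform

theorem cond_rank_mul_totally_random_general
    {F S T M : Type*} [Field F] [Fintype F] [Fintype T] [DecidableEq T] [Fintype M] [DecidableEq M]
    (A : PMF (Matrix S T F)) (n r : ℕ) (joint : PMF (Matrix S T F × Matrix T M F))
    (hjoint : joint =
      A.bind fun a => (PMF.uniformOfFintype (Matrix T M F)).map fun b => (a, b))
    (hpos : joint.toOuterMeasure {p | p.1.rank = n} ≠ 0) :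
    joint.toOuterMeasure {p | (p.1 * p.2).rank = r ∧ p.1.rank = n} /
        joint.toOuterMeasure {p | p.1.rank = n} =
      ENNReal.ofReal (zeta2 (Fintype.card F) r n (Fintype.card M)) := by
  subst hjoint
  have hE : A.toOuterMeasure {a | a.rank = n} ≠ 0 := by
    rwa [← toOuterMeasure_bind_map_prodMk_fst A fun _ => PMF.uniformOfFintype (Matrix T M F)]
  refine toOuterMeasure_bind_map_prodMk_div_of_const A
    (fun _ => PMF.uniformOfFintype (Matrix T M F)) (S := fun a => {b | (a * b).rank = r}) hE ?_
  rintro a rfl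
  exact toOuterMeasure_uniformOfFintype_rank_mul a r

/-- Let `A` be a random `s × t` matrix over `F_q` with arbitrary distribution
and `B` an independent totally random `t × m` matrix.  Conditional on
`rank A = n` (an event of positive probability), `rank (A * B) = r` has
probability `ζ_r^{n,m}`, for any `r ≤ min (n, m, t)`. -/
theorem cond_rank_mul_totally_random
    {F : Type*} [Field F] [Fintype F] [DecidableEq F]
    (s t m : ℕ) (A : PMF (Matrix (Fin s) (Fin t) F))
    (n r : ℕ) (hr : r ≤ min n (min m t))
    (joint : PMF (Matrix (Fin s) (Fin t) F × Matrix (Fin t) (Fin m) F))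
    (hjoint : joint =
      A.bind fun a =>
        (PMF.uniformOfFintype (Matrix (Fin t) (Fin m) F)).map fun b => (a, b))
    (hpos : joint.toOuterMeasure {p | p.1.rank = n} ≠ 0) :
    joint.toOuterMeasure {p | (p.1 * p.2).rank = r ∧ p.1.rank = n} /
        joint.toOuterMeasure {p | p.1.rank = n} =
      ENNReal.ofReal (zeta2 (Fintype.card F) r n m) := by
  simpa only [Fintype.card_fin] using
    cond_rank_mul_totally_random_general A n r joint hjoint hpos
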